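/- Let α be a tempered distribution on ℝ whose Fourier transform is supported at the single point {0}. Then α, viewed as a distribution, equals a polynomial function; that is, there exist finitely many coefficients c_0,…,c_m such that α is given by integration against the polynomial x ↦ Σ c_j x^j. -/

import Mathlib

open MeasureTheory

/-- A tempered distribution `α` vanishes on an open set `U` if it kills every Schwartz
function whose (closed) support is contained in `U`. -/
def DistVanishesOn (α : SchwartzMap ℝ ℂ →L[ℂ] ℂ) (U : Set ℝ) : Prop :=
  ∀ φ : SchwartzMap ℝ ℂ, tsupport (φ : ℝ → ℂ) ⊆ U → α φ = 0

/-- The support of a tempered distribution: the complement of the union of the open sets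
on which it vanishes. -/
def DistSupport (α : SchwartzMap ℝ ℂ →L[ℂ] ℂ) : Set ℝ :=
  {x : ℝ | ∀ U : Set ℝ, IsOpen U → x ∈ U → ¬ DistVanishesOn α U}

/-!
Composing `α` with the Fourier transform gives a continuous functional `T` supported at `0`, with
`α φ = T (𝓕⁻ φ)`. Continuity bounds `T` by finitely many Schwartz seminorms, hence by derivatives
up to some order `N`. Multiplying `φ` by the cutoff `χ (ε⁻¹ • ·)` does not change `T φ`, and if `φ`
is flat to order `N` at `0`, Taylor's bound makes those seminorms of the product tend to `0` with
`ε`; so `T φ = 0`. Thus `T` factors through the finitely many functionals `φ ↦ φ⁽ᵏ⁾(0)`, `k ≤ N`,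
and these turn into the moments `∫ (2πix)ᵏ φ(x) dx` when evaluated at `𝓕⁻ φ`.
-/

section

open Distribution FourierTransform Filter SchwartzMap
open scoped ContDiff Manifold Topology

variable {E F G : Type*} [NormedAddCommGroup E] [NormedSpace ℝ E]
  [NormedAddCommGroup F] [NormedSpace ℝ F]

theorem norm_iteratedFDeriv_le_mul_pow_of_eq_zero {f : E → F} {x₀ : E} {m : ℕ} {C : ℝ}
    (hf : ContDiff ℝ m f) (hzero : ∀ i < m, iteratedFDeriv ℝ i f x₀ = 0)
    (hC : ∀ x, ‖iteratedFDeriv ℝ m f x‖ ≤ C) {i j : ℕ} (hij : i + j = m) (x : E) :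
    ‖iteratedFDeriv ℝ i f x‖ ≤ C * ‖x - x₀‖ ^ j := by
  induction j generalizing i x with
  | zero =>
    obtain rfl : i = m := hij
    simpa using hC x
  | succ j ih =>
    have hC₀ : 0 ≤ C := (norm_nonneg _).trans (hC x)
    have hi : i < m := by lia
    have hderiv : ∀ y ∈ Metric.closedBall x₀ ‖x - x₀‖,
        ‖fderiv ℝ (iteratedFDeriv ℝ i f) y‖ ≤ C * ‖x - x₀‖ ^ j := fun y hy ↦ by
      rw [norm_fderiv_iteratedFDeriv]
      refine (ih (by lia) y).trans ?_
      gcongr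
      exact mem_closedBall_iff_norm.1 hy
    have hmvt := (convex_closedBall x₀ ‖x - x₀‖).norm_image_sub_le_of_norm_fderiv_le
      (fun y _ ↦ hf.differentiable_iteratedFDeriv (mod_cast hi) y) hderiv
      (Metric.mem_closedBall_self (norm_nonneg _)) (mem_closedBall_iff_norm.2 le_rfl)
    rwa [hzero i hi, sub_zero, mul_assoc, ← pow_succ] at hmvt

theorem seminorm_smulLeftCLM_le {g : E → ℝ} (hg : g.HasTemperateGrowth) (φ : 𝓢(E, F)) {k n : ℕ}
    {δ : ℝ} {A : ℕ → ℝ} (hA : ∀ i ≤ n, ∀ x,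
      ‖x‖ ^ k * (‖iteratedFDeriv ℝ i g x‖ * ‖iteratedFDeriv ℝ (n - i) φ x‖) ≤ δ * A i) :
    SchwartzMap.seminorm ℝ k n (smulLeftCLM F g φ) ≤
      δ * ∑ i ∈ Finset.range (n + 1), n.choose i * A i := by
  have hleibniz : ∀ x, ‖x‖ ^ k * ‖iteratedFDeriv ℝ n (smulLeftCLM F g φ) x‖ ≤
      δ * ∑ i ∈ Finset.range (n + 1), n.choose i * A i := fun x ↦ by
    rw [smulLeftCLM_apply hg]
    calc ‖x‖ ^ k * ‖iteratedFDeriv ℝ n (fun y ↦ g y • φ y) x‖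
        ≤ ‖x‖ ^ k * ∑ i ∈ Finset.range (n + 1),
            n.choose i * ‖iteratedFDeriv ℝ i g x‖ * ‖iteratedFDeriv ℝ (n - i) φ x‖ := by
          gcongr
          exact norm_iteratedFDeriv_smul_le hg.1 (φ.smooth ⊤) x (mod_cast le_top)
      _ = ∑ i ∈ Finset.range (n + 1), n.choose i *
            (‖x‖ ^ k * (‖iteratedFDeriv ℝ i g x‖ * ‖iteratedFDeriv ℝ (n - i) φ x‖)) := by
          rw [Finset.mul_sum]
          exact Finset.sum_congr rfl fun i _ ↦ by ring
      _ ≤ ∑ i ∈ Finset.range (n + 1), n.choose i * (δ * A i) :=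
          Finset.sum_le_sum fun i hi ↦ mul_le_mul_of_nonneg_left
            (hA i (Finset.mem_range_succ_iff.1 hi) x) (Nat.cast_nonneg _)
      _ = δ * ∑ i ∈ Finset.range (n + 1), n.choose i * A i := by
          rw [Finset.mul_sum]
          exact Finset.sum_congr rfl fun i _ ↦ by ring
  exact seminorm_le_bound ℝ k n _ (le_trans (by positivity) (hleibniz 0)) hleibniz

theorem hasTemperateGrowth_comp_const_smul {f : E → F} (hf : f.HasTemperateGrowth) (c : ℝ) :
    (fun x ↦ f (c • x)).HasTemperateGrowth :=
  hf.comp (by fun_prop : Function.HasTemperateGrowth fun x : E ↦ c • x)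

theorem norm_iteratedFDeriv_comp_const_smul {f : E → F} {i : ℕ} (hf : ContDiff ℝ i f) (c : ℝ)
    (x : E) :
    ‖iteratedFDeriv ℝ i (fun y ↦ f (c • y)) x‖ = |c| ^ i * ‖iteratedFDeriv ℝ i f (c • x)‖ := by
  rw [iteratedFDeriv_comp_const_smul c hf, norm_smul, norm_pow, Real.norm_eq_abs]

theorem norm_iteratedFDeriv_comp_const_smul_sub_le (f : 𝓢(E, F)) (i : ℕ) {c : ℝ} (hc : |c| ≤ 1)
    (x : E) :
    ‖iteratedFDeriv ℝ i (fun y ↦ f (c • y) - f 0) x‖ ≤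
      |c| * (SchwartzMap.seminorm ℝ 0 (max i 1) f * (1 + ‖x‖)) := by
  rcases Nat.eq_zero_or_pos i with rfl | hi
  · have hmvt : ‖f (c • x) - f 0‖ ≤ SchwartzMap.seminorm ℝ 0 1 f * ‖c • x‖ := by
      simpa only [sub_zero] using convex_univ.norm_image_sub_le_of_norm_fderiv_le
        (fun y _ ↦ f.differentiableAt)
        (fun y _ ↦ by
          rw [← norm_iteratedFDeriv_one]
          exact norm_iteratedFDeriv_le_seminorm ℝ f 1 y) (Set.mem_univ 0) (Set.mem_univ (c • x))
    calc ‖iteratedFDeriv ℝ 0 (fun y ↦ f (c • y) - f 0) x‖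
        ≤ |c| * (SchwartzMap.seminorm ℝ 0 1 f * ‖x‖) := by
          rwa [norm_iteratedFDeriv_zero, mul_left_comm, ← Real.norm_eq_abs, ← norm_smul]
      _ ≤ |c| * (SchwartzMap.seminorm ℝ 0 (max 0 1) f * (1 + ‖x‖)) := by
          gcongr
          · exact le_rfl
          · exact le_add_of_nonneg_left zero_le_one
  · have hsmooth : ContDiff ℝ i fun y ↦ f (c • y) := (f.smooth i).comp (contDiff_const_smul c)
    have hsub : iteratedFDeriv ℝ i (fun y ↦ f (c • y) - f 0) x =
        iteratedFDeriv ℝ i (fun y ↦ f (c • y)) x := by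
      rw [fun_iteratedFDeriv_sub_apply hsmooth.contDiffAt contDiffAt_const,
        iteratedFDeriv_const_of_ne hi.ne', Pi.zero_apply, sub_zero]
    rw [hsub, norm_iteratedFDeriv_comp_const_smul (f.smooth i), max_eq_left hi]
    gcongr
    · exact pow_le_of_le_one (abs_nonneg c) hc hi.ne'
    · refine (norm_iteratedFDeriv_le_seminorm ℝ f i _).trans ?_
      exact le_mul_of_one_le_right (by positivity) (le_add_of_nonneg_right (norm_nonneg x))

theorem seminorm_smulLeftCLM_comp_const_smul_sub_le (χ : 𝓢(E, ℝ)) (φ : 𝓢(E, F)) (k n : ℕ)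
    {c : ℝ} (hc : |c| ≤ 1) :
    SchwartzMap.seminorm ℝ k n (smulLeftCLM F (fun x ↦ χ (c • x)) φ - χ 0 • φ) ≤
      |c| * ∑ i ∈ Finset.range (n + 1), n.choose i * (SchwartzMap.seminorm ℝ 0 (max i 1) χ *
        (SchwartzMap.seminorm ℝ k (n - i) φ + SchwartzMap.seminorm ℝ (k + 1) (n - i) φ)) := by
  have hχc := hasTemperateGrowth_comp_const_smul χ.hasTemperateGrowth c
  have hχc₀ : (fun x ↦ χ (c • x) - χ 0).HasTemperateGrowth := hχc.sub (.const _)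
  have hsub : smulLeftCLM F (fun x ↦ χ (c • x)) φ - χ 0 • φ =
      smulLeftCLM F (fun x ↦ χ (c • x) - χ 0) φ := by
    ext x
    rw [_root_.sub_apply, _root_.smul_apply, smulLeftCLM_apply_apply hχc,
      smulLeftCLM_apply_apply hχc₀, sub_smul]
  rw [hsub]
  refine seminorm_smulLeftCLM_le hχc₀ φ fun i _ x ↦ ?_
  calc ‖x‖ ^ k * (‖iteratedFDeriv ℝ i (fun y ↦ χ (c • y) - χ 0) x‖ *
        ‖iteratedFDeriv ℝ (n - i) φ x‖)
      ≤ ‖x‖ ^ k * (|c| * (SchwartzMap.seminorm ℝ 0 (max i 1) χ * (1 + ‖x‖)) *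
        ‖iteratedFDeriv ℝ (n - i) φ x‖) := by
        gcongr
        exact norm_iteratedFDeriv_comp_const_smul_sub_le χ i hc x
    _ = |c| * (SchwartzMap.seminorm ℝ 0 (max i 1) χ *
        (‖x‖ ^ k * ‖iteratedFDeriv ℝ (n - i) φ x‖ +
          ‖x‖ ^ (k + 1) * ‖iteratedFDeriv ℝ (n - i) φ x‖)) := by ring
    _ ≤ _ := by gcongr <;> exact le_seminorm ℝ _ _ φ x

theorem tendsto_smulLeftCLM_comp_const_smul (χ : 𝓢(E, ℝ)) (φ : 𝓢(E, F)) :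
    Tendsto (fun c : ℝ ↦ smulLeftCLM F (fun x ↦ χ (c • x)) φ) (𝓝 0) (𝓝 (χ 0 • φ)) := by
  refine ((schwartz_withSeminorms ℝ E F).tendsto_nhds _ _).2 fun ⟨k, n⟩ ε hε ↦ ?_
  have hlim (K : ℝ) : Tendsto (fun c : ℝ ↦ |c| * K) (𝓝 0) (𝓝 0) := by
    simpa using (continuous_abs.tendsto (0 : ℝ)).mul_const K
  filter_upwards [(hlim _).eventually_lt_const hε, Metric.closedBall_mem_nhds (0 : ℝ) one_pos]
    with c hcε hc
  rw [mem_closedBall_zero_iff, Real.norm_eq_abs] at hc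
  exact (seminorm_smulLeftCLM_comp_const_smul_sub_le χ φ k n hc).trans_lt hcε

theorem seminorm_smulLeftCLM_comp_inv_smul_le (χ : 𝓢(E, ℝ)) {φ : 𝓢(E, F)} (k : ℕ) {n m : ℕ}
    (hnm : n ≤ m) (hφ : ∀ i < m, iteratedFDeriv ℝ i φ 0 = 0) {ε : ℝ} (hε : 0 < ε) :
    SchwartzMap.seminorm ℝ k n (smulLeftCLM F (fun x ↦ χ (ε⁻¹ • x)) φ) ≤
      ε ^ (k + (m - n)) * ∑ i ∈ Finset.range (n + 1), n.choose i *
        (SchwartzMap.seminorm ℝ 0 m φ * SchwartzMap.seminorm ℝ (k + i + (m - n)) i χ) := by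
  refine seminorm_smulLeftCLM_le (hasTemperateGrowth_comp_const_smul χ.hasTemperateGrowth _)
    φ fun i hi x ↦ ?_
  set y := ε⁻¹ • x
  have hxy : ‖x‖ = ε * ‖y‖ := by
    rw [norm_smul, norm_inv, Real.norm_of_nonneg hε.le, mul_inv_cancel_left₀ hε.ne']
  have htaylor : ‖iteratedFDeriv ℝ (n - i) φ x‖ ≤
      SchwartzMap.seminorm ℝ 0 m φ * ‖x‖ ^ (i + (m - n)) := by
    simpa using norm_iteratedFDeriv_le_mul_pow_of_eq_zero (φ.smooth m) hφ
      (norm_iteratedFDeriv_le_seminorm ℝ φ m) (by lia : n - i + (i + (m - n)) = m) x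
  calc ‖x‖ ^ k * (‖iteratedFDeriv ℝ i (fun z ↦ χ (ε⁻¹ • z)) x‖ * ‖iteratedFDeriv ℝ (n - i) φ x‖)
      ≤ ‖x‖ ^ k * ((ε⁻¹ ^ i * ‖iteratedFDeriv ℝ i χ y‖) *
        (SchwartzMap.seminorm ℝ 0 m φ * ‖x‖ ^ (i + (m - n)))) := by
        rw [norm_iteratedFDeriv_comp_const_smul (χ.smooth i), abs_of_pos (inv_pos.2 hε)]
        gcongr
    _ = (ε⁻¹ * ε) ^ i * (ε ^ (k + (m - n)) * (SchwartzMap.seminorm ℝ 0 m φ *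
        (‖y‖ ^ (k + i + (m - n)) * ‖iteratedFDeriv ℝ i χ y‖))) := by
        rw [hxy]
        ring
    _ ≤ _ := by
        rw [inv_mul_cancel₀ hε.ne', one_pow, one_mul]
        gcongr
        exact le_seminorm ℝ _ _ χ y

theorem tendsto_seminorm_smulLeftCLM_comp_inv_smul (χ : 𝓢(E, ℝ)) {φ : 𝓢(E, F)} (k : ℕ)
    {n m : ℕ} (hnm : n < m) (hφ : ∀ i < m, iteratedFDeriv ℝ i φ 0 = 0) :
    Tendsto (fun ε : ℝ ↦ SchwartzMap.seminorm ℝ k n (smulLeftCLM F (fun x ↦ χ (ε⁻¹ • x)) φ))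
      (𝓝[>] 0) (𝓝 0) := by
  have hlim (K : ℝ) : Tendsto (fun ε : ℝ ↦ ε ^ (k + (m - n)) * K) (𝓝[>] 0) (𝓝 0) := by
    have hcont : Continuous fun ε : ℝ ↦ ε ^ (k + (m - n)) * K := by fun_prop
    refine (hcont.tendsto' 0 0 ?_).mono_left nhdsWithin_le_nhds
    rw [zero_pow (by lia), zero_mul]
  exact squeeze_zero' (.of_forall fun ε ↦ apply_nonneg _ _)
    (eventually_mem_nhdsWithin.mono fun ε hε ↦
      seminorm_smulLeftCLM_comp_inv_smul_le χ k hnm.le hφ hε) (hlim _)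

theorem map_eq_zero_of_hasCompactSupport_of_disjoint_dsupport [FiniteDimensional ℝ E]
    [AddCommMonoid G] {T : 𝓢(E, F) →+ G} {φ : 𝓢(E, F)} (hφ : HasCompactSupport φ)
    (hdisj : Disjoint (tsupport φ) (dsupport T)) : T φ = 0 := by
  have hlocal : ∀ x : tsupport φ, ∃ U : Set E,
      (x.1 ∈ U ∧ IsOpen U ∧ Bornology.IsBounded U) ∧ IsVanishingOn T U := fun x ↦
    (Metric.hasBasis_nhds_isOpen_isBounded x.1).notMem_dsupport.1
      (hdisj.notMem_of_mem_left x.2)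
  choose U hU hvanish using hlocal
  obtain ⟨t, ht⟩ := hφ.isCompact.elim_finite_subcover U (fun x ↦ (hU x).2.1)
    fun x hx ↦ Set.mem_iUnion.2 ⟨⟨x, hx⟩, (hU _).1⟩
  obtain ⟨ρ, hρ⟩ := SmoothPartitionOfUnity.exists_isSubordinate 𝓘(ℝ, E) (isClosed_tsupport φ)
    (fun i : t ↦ U i) (fun i ↦ (hU i).2.1) (by rwa [Set.iUnion_subtype])
  have hgrowth (i : t) : (ρ i : E → ℝ).HasTemperateGrowth :=
    HasCompactSupport.hasTemperateGrowth
      (Metric.isCompact_of_isClosed_isBounded (isClosed_tsupport _) ((hU i).2.2.subset (hρ i)))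
      (ρ i).contMDiff.contDiff
  have hsum : φ = ∑ i, smulLeftCLM F (ρ i) φ := by
    ext x
    simp only [_root_.sum_apply, smulLeftCLM_apply_apply (hgrowth _), ← Finset.sum_smul]
    by_cases hx : x ∈ tsupport φ
    · rw [← finsum_eq_sum_of_fintype, ρ.sum_eq_one hx, one_smul]
    · rw [image_eq_zero_of_notMem_tsupport hx, smul_zero]
  rw [hsum, map_sum]
  exact Finset.sum_eq_zero fun i _ ↦
    hvanish i _ (((tsupport_smulLeftCLM_subset _ _).trans Set.inter_subset_right).trans (hρ i))

theorem exists_hasCompactSupport_eventuallyEq_one [FiniteDimensional ℝ E] :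
    ∃ χ : 𝓢(E, ℝ), HasCompactSupport χ ∧ χ =ᶠ[𝓝 0] 1 := by
  let bump : ContDiffBump (0 : E) := ⟨1, 2, one_pos, one_lt_two⟩
  exact ⟨bump.hasCompactSupport.toSchwartzMap bump.contDiff, bump.hasCompactSupport,
    bump.eventuallyEq_one⟩

theorem map_eq_zero_of_disjoint_dsupport [FiniteDimensional ℝ E] [AddCommGroup G] [Module ℝ G]
    [TopologicalSpace G] [T2Space G] {T : 𝓢(E, F) →L[ℝ] G} {φ : 𝓢(E, F)}
    (hdisj : Disjoint (tsupport φ) (dsupport T)) : T φ = 0 := by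
  obtain ⟨χ, hχ_compact, hχ_one⟩ := exists_hasCompactSupport_eventuallyEq_one (E := E)
  have hlim : Tendsto (fun c : ℝ ↦ T (smulLeftCLM F (fun x ↦ χ (c • x)) φ)) (𝓝[≠] 0)
      (𝓝 (T φ)) := by
    have hχ₀ : χ 0 = 1 := hχ_one.self_of_nhds
    simpa [hχ₀, Function.comp_def] using (T.continuous.tendsto _).comp
      ((tendsto_smulLeftCLM_comp_const_smul χ φ).mono_left nhdsWithin_le_nhds)
  have hzero : ∀ᶠ c : ℝ in 𝓝[≠] 0, T (smulLeftCLM F (fun x ↦ χ (c • x)) φ) = 0 := by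
    filter_upwards [self_mem_nhdsWithin] with c hc
    have hsupp := tsupport_smulLeftCLM_subset (fun x ↦ χ (c • x)) φ
    have hχc : HasCompactSupport fun x ↦ χ (c • x) := hχ_compact.comp_smul hc
    exact map_eq_zero_of_hasCompactSupport_of_disjoint_dsupport (T := T.toLinearMap.toAddMonoidHom)
      (hχc.of_isClosed_subset (isClosed_tsupport _) (hsupp.trans Set.inter_subset_right))
      (hdisj.mono_left (hsupp.trans Set.inter_subset_left))
  exact tendsto_nhds_unique_of_eventuallyEq hlim tendsto_const_nhds hzero

theorem exists_norm_le_mul_sum_seminorm [SeminormedAddCommGroup G] [NormedSpace ℝ G]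
    (T : 𝓢(E, F) →L[ℝ] G) : ∃ (s : Finset (ℕ × ℕ)) (C : ℝ),
      ∀ φ, ‖T φ‖ ≤ C * ∑ p ∈ s, SchwartzMap.seminorm ℝ p.1 p.2 φ := by
  obtain ⟨s, C, -, hC⟩ := Seminorm.bound_of_continuous (schwartz_withSeminorms ℝ E F)
    ((normSeminorm ℝ G).comp T.toLinearMap) T.continuous.norm
  refine ⟨s, C, fun φ ↦ (hC φ).trans ?_⟩
  have hsup := Seminorm.finset_sup_le_sum (schwartzSeminormFamily ℝ E F) s φ
  rw [_root_.sum_apply] at hsup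
  exact mul_le_mul_of_nonneg_left hsup C.2

theorem exists_forall_map_eq_zero_of_dsupport_subset_singleton_zero [FiniteDimensional ℝ E]
    [NormedAddCommGroup G] [NormedSpace ℝ G] {T : 𝓢(E, F) →L[ℝ] G} (hT : dsupport T ⊆ {0}) :
    ∃ m : ℕ, ∀ φ : 𝓢(E, F), (∀ i < m, iteratedFDeriv ℝ i φ 0 = 0) → T φ = 0 := by
  obtain ⟨s, C, hC⟩ := exists_norm_le_mul_sum_seminorm T
  obtain ⟨χ, -, hχ⟩ := exists_hasCompactSupport_eventuallyEq_one (E := E)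
  refine ⟨s.sup Prod.snd + 1, fun φ hφ ↦ ?_⟩
  have hlocal (ε : ℝ) : T φ = T (smulLeftCLM F (fun x ↦ χ (ε⁻¹ • x)) φ) := by
    rw [← sub_eq_zero, ← map_sub]
    refine map_eq_zero_of_disjoint_dsupport (.mono_right hT ?_)
    rw [Set.disjoint_singleton_right, notMem_tsupport_iff_eventuallyEq]
    have hscale : Tendsto (fun x : E ↦ ε⁻¹ • x) (𝓝 0) (𝓝 0) :=
      (continuous_const_smul ε⁻¹).tendsto' 0 0 (smul_zero _)
    filter_upwards [hscale.eventually hχ] with x hx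
    rw [_root_.sub_apply, smulLeftCLM_apply_apply
      (hasTemperateGrowth_comp_const_smul χ.hasTemperateGrowth _), hx, Pi.one_apply, one_smul,
      sub_self, Pi.zero_apply]
  have hlim : Tendsto (fun ε : ℝ ↦ C * ∑ p ∈ s, SchwartzMap.seminorm ℝ p.1 p.2
      (smulLeftCLM F (fun x ↦ χ (ε⁻¹ • x)) φ)) (𝓝[>] 0) (𝓝 0) := by
    simpa using (tendsto_finsetSum s fun p hp ↦ tendsto_seminorm_smulLeftCLM_comp_inv_smul χ p.1
      (Nat.lt_succ_of_le (Finset.le_sup (f := Prod.snd) hp)) hφ).const_mul C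
  refine norm_le_zero_iff.1 (ge_of_tendsto' hlim fun ε ↦ ?_)
  rw [hlocal ε]
  exact hC _

/-- The functional `φ ↦ φ⁽ᵏ⁾(0)`, which is the `k`-th derivative of the Dirac delta up to the
sign `(-1)ᵏ`. -/
noncomputable def iteratedDerivAtZero (𝕜 : Type*) [RCLike 𝕜] (k : ℕ) : 𝓢(ℝ, 𝕜) →ₗ[𝕜] 𝕜 where
  toFun φ := iteratedDeriv k φ 0
  map_add' φ ψ := iteratedDeriv_add (φ.smooth k).contDiffAt (ψ.smooth k).contDiffAt
  map_smul' c φ := iteratedDeriv_const_smul_field c φ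

theorem mem_span_iteratedDerivAtZero_of_dsupport_subset_singleton_zero {𝕜 : Type*} [RCLike 𝕜]
    {T : 𝓢(ℝ, 𝕜) →L[𝕜] 𝕜} (hT : dsupport T ⊆ {0}) :
    ∃ m : ℕ, T.toLinearMap ∈
      Submodule.span 𝕜 (Set.range fun k : Fin m ↦ iteratedDerivAtZero 𝕜 k) := by
  obtain ⟨m, hm⟩ := exists_forall_map_eq_zero_of_dsupport_subset_singleton_zero
    (T := T.restrictScalars ℝ) hT
  refine ⟨m, mem_span_of_iInf_ker_le_ker fun φ hφ ↦ hm φ fun i hi ↦ ?_⟩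
  have hderiv : iteratedDeriv i φ 0 = 0 := (Submodule.mem_iInf _).1 hφ ⟨i, hi⟩
  rw [← norm_eq_zero, norm_iteratedFDeriv_eq_norm_iteratedDeriv, hderiv, norm_zero]

theorem integrable_pow_smul (φ : 𝓢(ℝ, F)) (k : ℕ) : Integrable fun x : ℝ ↦ x ^ k • φ x := by
  refine (integrable_norm_iff (by fun_prop)).1 ?_
  simpa only [norm_smul, norm_pow] using φ.integrable_pow_mul volume k

theorem iteratedDeriv_fourierInv_zero {V : Type*} [NormedAddCommGroup V] [NormedSpace ℂ V]
    (φ : 𝓢(ℝ, V)) (k : ℕ) :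
    iteratedDeriv k (𝓕⁻ φ : 𝓢(ℝ, V)) 0 =
      ∫ x : ℝ, (2 * Real.pi * Complex.I * x) ^ k • φ x := by
  have hreflect : (𝓕⁻ φ : 𝓢(ℝ, V)) = fun x : ℝ ↦ 𝓕 (φ : ℝ → V) (-x) := by
    ext x
    rw [fourierInv_coe, Real.fourierInv_eq_fourier_neg]
  have hfourier : iteratedDeriv k (𝓕 (φ : ℝ → V)) 0 =
      ∫ x : ℝ, (-2 * Real.pi * Complex.I * x) ^ k • φ x := by
    rw [Real.iteratedDeriv_fourier (N := ⊤) (fun n _ ↦ integrable_pow_smul φ n) le_top]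
    simp [Real.fourier_eq']
  rw [hreflect, iteratedDeriv_comp_neg, neg_zero, hfourier, ← integral_smul]
  refine integral_congr_ae (.of_forall fun x ↦ ?_)
  simp only [← Complex.coe_smul, smul_smul]
  push_cast
  rw [← mul_pow]
  ring_nf

theorem sum_mul_integral_pow_smul (a : ℂ) {m : ℕ} (c : Fin m → ℂ) (φ : 𝓢(ℝ, ℂ)) :
    ∑ k : Fin m, c k * ∫ x : ℝ, (a * x) ^ (k : ℕ) • φ x =
      ∫ x : ℝ, (∑ k : Fin m, Polynomial.monomial k (c k * a ^ (k : ℕ))).eval (x : ℂ) * φ x := by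
  have hterm (k : Fin m) (x : ℝ) : c k * (a * x) ^ (k : ℕ) • φ x =
      c k * a ^ (k : ℕ) * (x ^ (k : ℕ) • φ x) := by
    rw [Complex.real_smul, smul_eq_mul]
    push_cast
    ring
  have hint (k : Fin m) : Integrable fun x : ℝ ↦ c k * (a * x) ^ (k : ℕ) • φ x := by
    simpa only [hterm] using (integrable_pow_smul φ k).const_mul (c k * a ^ (k : ℕ))
  simp_rw [← integral_const_mul]
  rw [← integral_finsetSum _ fun k _ ↦ hint k]
  simp only [Polynomial.eval_finsetSum, Polynomial.eval_monomial, Finset.sum_mul, mul_pow,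
    smul_eq_mul, mul_assoc]

theorem distSupport_eq_dsupport (α : 𝓢(ℝ, ℂ) →L[ℂ] ℂ) : DistSupport α = dsupport α := by
  ext x
  rw [mem_dsupport_iff_not_isVanishingOn]
  exact forall_congr' fun U ↦ forall_comm

end

/-- If the Fourier transform of a tempered distribution `α` on `ℝ` is supported at the
single point `{0}`, then `α` is given by integration against a polynomial. -/
theorem tempered_distribution_fourier_supported_at_zero_is_polynomial
    (α : SchwartzMap ℝ ℂ →L[ℂ] ℂ)
    (h : DistSupport (α.comp ((SchwartzMap.fourierTransformCLM ℂ : SchwartzMap ℝ ℂ →L[ℂ] SchwartzMap ℝ ℂ))) ⊆ {0}) :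
    ∃ P : Polynomial ℂ, ∀ φ : SchwartzMap ℝ ℂ,
      α φ = ∫ x : ℝ, P.eval (x : ℂ) * φ x := by
  rw [distSupport_eq_dsupport] at h
  obtain ⟨m, hspan⟩ := mem_span_iteratedDerivAtZero_of_dsupport_subset_singleton_zero h
  obtain ⟨c, hc⟩ := (Submodule.mem_span_range_iff_exists_fun ℂ).1 hspan
  refine ⟨∑ k : Fin m, Polynomial.monomial k (c k * (2 * Real.pi * Complex.I) ^ (k : ℕ)),
    fun φ ↦ ?_⟩
  set ψ : SchwartzMap ℝ ℂ := FourierTransform.fourierInv φ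
  calc α φ = α (SchwartzMap.fourierTransformCLM ℂ ψ) := by
        rw [SchwartzMap.fourierTransformCLM_apply, FourierTransform.fourier_fourierInv_eq]
    _ = ∑ k : Fin m, c k * iteratedDeriv k ψ 0 := by
        simpa [iteratedDerivAtZero] using (LinearMap.congr_fun hc ψ).symm
    _ = ∑ k : Fin m, c k * ∫ x : ℝ, (2 * Real.pi * Complex.I * x) ^ (k : ℕ) • φ x := by
        simp only [ψ, iteratedDeriv_fourierInv_zero]
    _ = _ := sum_mul_integral_pow_smul _ c φ
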